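/- For (x,t) ∈ ℝ² set y = exp(3^{−1/4} x) and define u(x,t) = [ 2 − 32(1 + 2√3)(y + 4y³) cos( (√3 t + π)/3 ) + 16 y² ( 8√3 + 5 − 4 sin( (4√3 t + π)/6 ) ) + 32 y⁴ ] / [ 4 ( 4√3 y sin(t/√3) − 4 y cos(t/√3) + 4 y² + 1 )² ]. Then u is smooth and satisfies the "good" Boussinesq equation u_tt − u_xx + (u²)_xx + u_xxxx = 0 on the open set of all (x,t) ∈ ℝ² for which 4√3 y sin(t/√3) − 4 y cos(t/√3) + 4 y² + 1 ≠ 0. -/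

import Mathlib

/-- Partial derivative in the first (spatial) variable. -/
noncomputable def pdx {E : Type*} [NormedAddCommGroup E] [NormedSpace ℝ E]
    (f : ℝ × ℝ → E) : ℝ × ℝ → E := fun p => fderiv ℝ f p (1, 0)

/-- Partial derivative in the second (time) variable. -/
noncomputable def pdt {E : Type*} [NormedAddCommGroup E] [NormedSpace ℝ E]
    (f : ℝ × ℝ → E) : ℝ × ℝ → E := fun p => fderiv ℝ f p (0, 1)

/-- y(x) = exp(3^{-1/4} x). -/
noncomputable def yfun (x : ℝ) : ℝ := Real.exp ((3 : ℝ) ^ (-(1 : ℝ) / 4) * x)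

/-!
The solution has the form `u = 1/2 + 6 (log τ)_xx`, where `4 τ²` is the denominator of the given
formula. If `φ = log τ` satisfies `φ_tt + φ_xxxx + 6 φ_xx² = 0`, then the second `x`-derivative of
this identity is the good Boussinesq equation for `u`; multiplied by `τ²`, the identity becomes
Hirota's equation `(D_t² + D_x⁴) τ·τ = 0`. As a function of `x`, `τ` is a quadratic polynomial in
`e^{kx}` whose middle coefficient oscillates harmonically in `t`, so the bilinear equation amounts
to a dispersion relation and a relation between amplitudes.
-/

/-- The derivative of `f` in the direction `v`, as a function of the base point. It allows the
`x`- and `t`-derivatives `pdx` and `pdt` to be treated together. -/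
noncomputable def dirDeriv {E F : Type*} [NormedAddCommGroup E] [NormedSpace ℝ E]
    [NormedAddCommGroup F] [NormedSpace ℝ F] (v : E) (f : E → F) : E → F :=
  fun p => fderiv ℝ f p v

local notation "∂[" v "]" => dirDeriv v

section DirectionalDerivative

open Set
open scoped ContDiff

variable {E F : Type*} [NormedAddCommGroup E] [NormedSpace ℝ E]
  [NormedAddCommGroup F] [NormedSpace ℝ F] {S : Set E} {v w : E}

theorem pdx_eq_dirDeriv (f : ℝ × ℝ → F) : pdx f = ∂[(1, 0)] f := rfl

theorem pdt_eq_dirDeriv (f : ℝ × ℝ → F) : pdt f = ∂[(0, 1)] f := rfl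

theorem dirDeriv_const_add (c : F) (f : E → F) : ∂[v] (fun p => c + f p) = ∂[v] f := by
  funext p
  simp only [dirDeriv, fderiv_const_add]

theorem dirDeriv_const_mul (a : ℝ) (f : E → ℝ) :
    ∂[v] (fun p => a * f p) = fun p => a * ∂[v] f p := by
  funext p
  change fderiv ℝ (a • f) p v = a • fderiv ℝ f p v
  rw [fderiv_const_smul_field, Pi.smul_apply, smul_apply]

theorem dirDeriv_add {f g : E → F} {p : E} (hf : DifferentiableAt ℝ f p)
    (hg : DifferentiableAt ℝ g p) : ∂[v] (fun q => f q + g q) p = ∂[v] f p + ∂[v] g p := by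
  simp only [dirDeriv, fderiv_fun_add hf hg, add_apply]

theorem dirDeriv_mul {f g : E → ℝ} {p : E} (hf : DifferentiableAt ℝ f p)
    (hg : DifferentiableAt ℝ g p) :
    ∂[v] (fun q => f q * g q) p = ∂[v] f p * g p + f p * ∂[v] g p := by
  simp only [dirDeriv, fderiv_fun_mul hf hg, add_apply, smul_apply, smul_eq_mul]
  ring

theorem dirDeriv_pow {f : E → ℝ} {p : E} (hf : DifferentiableAt ℝ f p) (n : ℕ) :
    ∂[v] (fun q => f q ^ n) p = n * f p ^ (n - 1) * ∂[v] f p := by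
  simp [dirDeriv, fderiv_fun_pow n hf]

theorem eqOn_dirDeriv {f g : E → F} (hS : IsOpen S) (h : EqOn f g S) :
    EqOn (∂[v] f) (∂[v] g) S := by
  intro p hp
  rw [dirDeriv, (h.eventuallyEq_of_mem (hS.mem_nhds hp)).fderiv_eq, dirDeriv]

theorem differentiableAt_of_contDiffOn {f : E → F} (hS : IsOpen S) (hf : ContDiffOn ℝ ∞ f S)
    {p : E} (hp : p ∈ S) : DifferentiableAt ℝ f p :=
  (hf.contDiffAt (hS.mem_nhds hp)).differentiableAt (by simp)

theorem contDiffOn_dirDeriv {f : E → F} (hS : IsOpen S) (hf : ContDiffOn ℝ ∞ f S) :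
    ContDiffOn ℝ ∞ (∂[v] f) S :=
  (hf.fderiv_of_isOpen hS (by simp)).clm_apply contDiffOn_const

theorem dirDeriv_dirDeriv_add {f g : E → F} (hS : IsOpen S) (hf : ContDiffOn ℝ ∞ f S)
    (hg : ContDiffOn ℝ ∞ g S) :
    EqOn (∂[v] (∂[v] fun p => f p + g p)) (fun p => ∂[v] (∂[v] f) p + ∂[v] (∂[v] g) p) S := by
  have hadd {f g : E → F} (hf : ContDiffOn ℝ ∞ f S) (hg : ContDiffOn ℝ ∞ g S) :
      EqOn (∂[v] fun p => f p + g p) (fun p => ∂[v] f p + ∂[v] g p) S := fun _ hp =>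
    dirDeriv_add (differentiableAt_of_contDiffOn hS hf hp) (differentiableAt_of_contDiffOn hS hg hp)
  exact (eqOn_dirDeriv hS (hadd hf hg)).trans
    (hadd (contDiffOn_dirDeriv hS hf) (contDiffOn_dirDeriv hS hg))

theorem dirDeriv_comm {f : E → F} (hS : IsOpen S) (hf : ContDiffOn ℝ ∞ f S) :
    EqOn (∂[v] (∂[w] f)) (∂[w] (∂[v] f)) S := by
  intro p hp
  have hfderiv : DifferentiableAt ℝ (fderiv ℝ f) p :=
    differentiableAt_of_contDiffOn hS (hf.fderiv_of_isOpen hS (by simp)) hp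
  have hsecond (a b : E) : ∂[a] (∂[b] f) p = fderiv ℝ (fderiv ℝ f) p a b := by
    unfold dirDeriv
    simp [fderiv_clm_apply hfderiv (differentiableAt_const b)]
  have hsymm : IsSymmSndFDerivAt ℝ f p :=
    (hf.contDiffAt (hS.mem_nhds hp)).isSymmSndFDerivAt
      (by simpa using WithTop.coe_le_coe.mpr (show (2 : ℕ∞) ≤ ⊤ from le_top))
  rw [hsecond, hsecond, hsymm.eq]

theorem dirDeriv_dirDeriv_comm {f : E → F} (hS : IsOpen S) (hf : ContDiffOn ℝ ∞ f S) :
    EqOn (∂[w] (∂[w] (∂[v] (∂[v] f)))) (∂[v] (∂[v] (∂[w] (∂[w] f)))) S := by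
  have hcomm {g : E → F} (hg : ContDiffOn ℝ ∞ g S) :
      EqOn (∂[w] (∂[w] (∂[v] g))) (∂[v] (∂[w] (∂[w] g))) S :=
    (eqOn_dirDeriv hS (dirDeriv_comm hS hg)).trans (dirDeriv_comm hS (contDiffOn_dirDeriv hS hg))
  exact (hcomm (contDiffOn_dirDeriv hS hf)).trans (eqOn_dirDeriv hS (hcomm hf))

end DirectionalDerivative

section Hirota

open Set
open scoped ContDiff

variable {E : Type*} [NormedAddCommGroup E] [NormedSpace ℝ E] {S : Set E} {τ : E → ℝ}

/-- Half of Hirota's bilinear expression `D_v² τ·τ`. -/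
noncomputable def hirotaTwo (v : E) (τ : E → ℝ) (p : E) : ℝ :=
  τ p * ∂[v] (∂[v] τ) p - ∂[v] τ p ^ 2

/-- Half of Hirota's bilinear expression `D_v⁴ τ·τ`. -/
noncomputable def hirotaFour (v : E) (τ : E → ℝ) (p : E) : ℝ :=
  τ p * ∂[v] (∂[v] (∂[v] (∂[v] τ))) p - 4 * ∂[v] τ p * ∂[v] (∂[v] (∂[v] τ)) p
    + 3 * ∂[v] (∂[v] τ) p ^ 2

theorem dirDeriv_mul_of_logDeriv {ψ g : E → ℝ} {p v : E} (hτ : DifferentiableAt ℝ τ p)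
    (hlog : ∂[v] τ p = τ p * ψ p) (hg : DifferentiableAt ℝ g p) :
    ∂[v] (fun q => τ q * g q) p = τ p * (ψ p * g p + ∂[v] g p) := by
  rw [dirDeriv_mul hτ hg, hlog]
  ring

variable {ψ : E → ℝ} {v : E}

theorem dirDeriv_two_of_logDeriv (hS : IsOpen S) (hτ : DifferentiableOn ℝ τ S)
    (hψ : DifferentiableOn ℝ ψ S) (hlog : EqOn (∂[v] τ) (fun p => τ p * ψ p) S) :
    EqOn (∂[v] (∂[v] τ)) (fun p => τ p * (ψ p ^ 2 + ∂[v] ψ p)) S := by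
  intro p hp
  rw [eqOn_dirDeriv hS hlog hp, dirDeriv_mul_of_logDeriv (hτ.differentiableAt (hS.mem_nhds hp))
    (hlog hp) (hψ.differentiableAt (hS.mem_nhds hp))]
  ring

theorem dirDeriv_three_of_logDeriv (hS : IsOpen S) (hτ : DifferentiableOn ℝ τ S)
    (hψ : ContDiffOn ℝ ∞ ψ S) (hlog : EqOn (∂[v] τ) (fun p => τ p * ψ p) S) :
    EqOn (∂[v] (∂[v] (∂[v] τ)))
      (fun p => τ p * (ψ p ^ 3 + 3 * (ψ p * ∂[v] ψ p) + ∂[v] (∂[v] ψ) p)) S := by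
  intro p hp
  have d₀ := differentiableAt_of_contDiffOn hS hψ hp
  have d₁ := differentiableAt_of_contDiffOn hS (contDiffOn_dirDeriv (v := v) hS hψ) hp
  have htwo := dirDeriv_two_of_logDeriv hS hτ (hψ.differentiableOn (by simp)) hlog
  rw [eqOn_dirDeriv hS htwo hp, dirDeriv_mul_of_logDeriv (hτ.differentiableAt (hS.mem_nhds hp))
    (hlog hp) (by fun_prop), dirDeriv_add (by fun_prop) d₁, dirDeriv_pow d₀]
  push_cast
  ring

theorem dirDeriv_four_of_logDeriv (hS : IsOpen S) (hτ : DifferentiableOn ℝ τ S)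
    (hψ : ContDiffOn ℝ ∞ ψ S) (hlog : EqOn (∂[v] τ) (fun p => τ p * ψ p) S) :
    EqOn (∂[v] (∂[v] (∂[v] (∂[v] τ))))
      (fun p => τ p * (ψ p ^ 4 + 6 * ψ p ^ 2 * ∂[v] ψ p + 3 * ∂[v] ψ p ^ 2
        + 4 * ψ p * ∂[v] (∂[v] ψ) p + ∂[v] (∂[v] (∂[v] ψ)) p)) S := by
  intro p hp
  have hψ₁ := contDiffOn_dirDeriv (v := v) hS hψ
  have d₀ := differentiableAt_of_contDiffOn hS hψ hp
  have d₁ := differentiableAt_of_contDiffOn hS hψ₁ hp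
  have d₂ := differentiableAt_of_contDiffOn hS (contDiffOn_dirDeriv (v := v) hS hψ₁) hp
  rw [eqOn_dirDeriv hS (dirDeriv_three_of_logDeriv hS hτ hψ hlog) hp,
    dirDeriv_mul_of_logDeriv (hτ.differentiableAt (hS.mem_nhds hp)) (hlog hp) (by fun_prop),
    dirDeriv_add (by fun_prop) d₂, dirDeriv_add (by fun_prop) (by fun_prop), dirDeriv_pow d₀,
    congrFun (dirDeriv_const_mul _ _) p, dirDeriv_mul d₀ d₁]
  push_cast
  ring

theorem hirotaTwo_of_logDeriv (hS : IsOpen S) (hτ : DifferentiableOn ℝ τ S)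
    (hψ : DifferentiableOn ℝ ψ S) (hlog : EqOn (∂[v] τ) (fun p => τ p * ψ p) S) :
    EqOn (hirotaTwo v τ) (fun p => τ p ^ 2 * ∂[v] ψ p) S := by
  intro p hp
  rw [hirotaTwo, dirDeriv_two_of_logDeriv hS hτ hψ hlog hp, hlog hp]
  ring

theorem hirotaFour_of_logDeriv (hS : IsOpen S) (hτ : DifferentiableOn ℝ τ S)
    (hψ : ContDiffOn ℝ ∞ ψ S) (hlog : EqOn (∂[v] τ) (fun p => τ p * ψ p) S) :
    EqOn (hirotaFour v τ) (fun p => τ p ^ 2 * (∂[v] (∂[v] (∂[v] ψ)) p + 6 * ∂[v] ψ p ^ 2)) S := by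
  intro p hp
  rw [hirotaFour, dirDeriv_four_of_logDeriv hS hτ hψ hlog hp,
    dirDeriv_three_of_logDeriv hS hτ hψ hlog hp,
    dirDeriv_two_of_logDeriv hS hτ (hψ.differentiableOn (by simp)) hlog hp, hlog hp]
  ring

theorem dirDeriv_eq_mul_dirDeriv_log {p : E} (hτ : DifferentiableAt ℝ τ p) (h0 : τ p ≠ 0) :
    ∂[v] τ p = τ p * ∂[v] (fun q => Real.log (τ q)) p := by
  simp only [dirDeriv, fderiv.log hτ h0, smul_apply, smul_eq_mul]
  field_simp

end Hirota

section GoodBoussinesq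

open Set
open scoped ContDiff

variable {S : Set (ℝ × ℝ)} {u τ : ℝ × ℝ → ℝ}

/-- `u` is smooth on `S` and solves the good Boussinesq equation
`u_tt - u_xx + (u²)_xx + u_xxxx = 0` there. -/
def IsGoodBoussinesqOn (u : ℝ × ℝ → ℝ) (S : Set (ℝ × ℝ)) : Prop :=
  ContDiffOn ℝ ∞ u S ∧
    ∀ p ∈ S, pdt (pdt u) p - pdx (pdx u) p + pdx (pdx (fun q => u q ^ 2)) p
      + pdx (pdx (pdx (pdx u))) p = 0

/-- The bilinear form of the good Boussinesq equation on the constant background `c`, that is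
`(D_t² + (2c - 1) D_x² + D_x⁴) τ·τ = 0`, up to the factor `2`. -/
def IsHirotaBoussinesq (c : ℝ) (τ : ℝ × ℝ → ℝ) (p : ℝ × ℝ) : Prop :=
  hirotaTwo (0, 1) τ p + (2 * c - 1) * hirotaTwo (1, 0) τ p + hirotaFour (1, 0) τ p = 0

theorem IsGoodBoussinesqOn.of_potential {c : ℝ} {φ : ℝ × ℝ → ℝ} (hS : IsOpen S)
    (hφ : ContDiffOn ℝ ∞ φ S) (hu : EqOn u (fun p => c + 6 * pdx (pdx φ) p) S)
    (hpot : ∀ p ∈ S, pdt (pdt φ) p + (2 * c - 1) * pdx (pdx φ) p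
      + pdx (pdx (pdx (pdx φ))) p + 6 * pdx (pdx φ) p ^ 2 = 0) :
    IsGoodBoussinesqOn u S := by
  simp only [IsGoodBoussinesqOn, pdx_eq_dirDeriv, pdt_eq_dirDeriv] at hu hpot ⊢
  have hφxx : ContDiffOn ℝ ∞ (∂[(1, 0)] (∂[(1, 0)] φ)) S :=
    contDiffOn_dirDeriv hS (contDiffOn_dirDeriv hS hφ)
  have hφtt : ContDiffOn ℝ ∞ (∂[(0, 1)] (∂[(0, 1)] φ)) S :=
    contDiffOn_dirDeriv hS (contDiffOn_dirDeriv hS hφ)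
  have hus : ContDiffOn ℝ ∞ u S := (contDiffOn_const.add (contDiffOn_const.mul hφxx)).congr hu
  have hdu (v : ℝ × ℝ) :
      EqOn (∂[v] (∂[v] u)) (fun p => 6 * ∂[v] (∂[v] (∂[(1, 0)] (∂[(1, 0)] φ))) p) S := by
    simpa only [dirDeriv_const_add, dirDeriv_const_mul] using
      eqOn_dirDeriv (v := v) hS (eqOn_dirDeriv (v := v) hS hu)
  -- The equation is the second `x`-derivative of this identity, because `u_tt = 6 φ_ttxx`.
  have hintegrated : EqOn (fun p => u p ^ 2 + ∂[(1, 0)] (∂[(1, 0)] u) p)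
      (fun p => (c ^ 2 - c) + (u p + -6 * ∂[(0, 1)] (∂[(0, 1)] φ) p)) S := by
    intro p hp
    simp only [hdu (1, 0) hp, hu hp]
    linear_combination 6 * hpot p hp
  refine ⟨hus, fun p hp => ?_⟩
  have hxx := eqOn_dirDeriv (v := (1, 0)) hS (eqOn_dirDeriv (v := (1, 0)) hS hintegrated) hp
  rw [dirDeriv_const_add, dirDeriv_dirDeriv_add hS (hus.pow 2)
      (contDiffOn_dirDeriv hS (contDiffOn_dirDeriv hS hus)) hp,
    dirDeriv_dirDeriv_add hS hus (contDiffOn_const.mul hφtt) hp] at hxx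
  simp only [dirDeriv_const_mul] at hxx
  have hutt := (hdu (0, 1) hp).trans (congrArg (6 * ·) (dirDeriv_dirDeriv_comm hS hφ hp))
  linear_combination hxx + hutt

theorem IsGoodBoussinesqOn.of_hirota {c : ℝ} (hS : IsOpen S) (hτ : ContDiffOn ℝ ∞ τ S)
    (h0 : ∀ p ∈ S, τ p ≠ 0) (hbilin : ∀ p ∈ S, IsHirotaBoussinesq c τ p)
    (hu : ∀ p ∈ S, u p = c + 6 * (hirotaTwo (1, 0) τ p / τ p ^ 2)) :
    IsGoodBoussinesqOn u S := by
  have hτd : DifferentiableOn ℝ τ S := hτ.differentiableOn (by simp)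
  have hψ (v : ℝ × ℝ) : ContDiffOn ℝ ∞ (∂[v] fun q => Real.log (τ q)) S :=
    contDiffOn_dirDeriv hS (hτ.log h0)
  have hlog (v : ℝ × ℝ) : EqOn (∂[v] τ) (fun p => τ p * ∂[v] (fun q => Real.log (τ q)) p) S :=
    fun p hp => dirDeriv_eq_mul_dirDeriv_log (hτd.differentiableAt (hS.mem_nhds hp)) (h0 p hp)
  have htwo (v : ℝ × ℝ) :=
    hirotaTwo_of_logDeriv hS hτd ((hψ v).differentiableOn (by simp)) (hlog v)
  refine .of_potential (c := c) hS (hτ.log h0) (fun p hp => ?_) fun p hp => ?_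
  · have hτp := h0 p hp
    simp only [hu p hp, htwo (1, 0) hp, pdx_eq_dirDeriv]
    field_simp
  · have hmul := hbilin p hp
    rw [IsHirotaBoussinesq, htwo (0, 1) hp, htwo (1, 0) hp,
      hirotaFour_of_logDeriv hS hτd (hψ _) (hlog _) hp] at hmul
    refine (mul_eq_zero.mp ?_).resolve_left (pow_ne_zero 2 (h0 p hp))
    simp only [pdx_eq_dirDeriv, pdt_eq_dirDeriv]
    linear_combination hmul

end GoodBoussinesq

section Breather

open Real

/-- The harmonic oscillation of frequency `ω` with amplitudes `a` and `b`. -/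
noncomputable def harmonicOscillation (a b ω t : ℝ) : ℝ := a * cos (ω * t) + b * sin (ω * t)

theorem contDiff_harmonicOscillation (a b ω : ℝ) {n : WithTop ℕ∞} :
    ContDiff ℝ n (harmonicOscillation a b ω) := by
  unfold harmonicOscillation
  fun_prop

theorem differentiable_harmonicOscillation (a b ω : ℝ) :
    Differentiable ℝ (harmonicOscillation a b ω) :=
  (contDiff_harmonicOscillation a b ω (n := 1)).differentiable (by simp)

theorem deriv_harmonicOscillation (a b ω : ℝ) :
    deriv (harmonicOscillation a b ω) = harmonicOscillation (ω * b) (-(ω * a)) ω := by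
  funext t
  have hphase : HasDerivAt (fun t => ω * t) ω t := by simpa using (hasDerivAt_id t).const_mul ω
  refine (((hphase.cos.const_mul a).add (hphase.sin.const_mul b)).congr_deriv ?_).deriv
  rw [harmonicOscillation]
  ring

/-- The quadratic exponential polynomial `α + A(t) e^{kx} + β e^{2kx}`. Breather `τ`-functions have
this shape, which is preserved by both partial derivatives. -/
noncomputable def expQuadratic (k α : ℝ) (A : ℝ → ℝ) (β : ℝ) (p : ℝ × ℝ) : ℝ :=
  α + A p.2 * exp (k * p.1) + β * exp (k * p.1) ^ 2

variable {A : ℝ → ℝ} (k α β : ℝ)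

theorem contDiff_expQuadratic {n : WithTop ℕ∞} (hA : ContDiff ℝ n A) :
    ContDiff ℝ n (expQuadratic k α A β) := by
  unfold expQuadratic
  fun_prop

theorem dirDeriv_expQuadratic (hA : Differentiable ℝ A) (v : ℝ × ℝ) :
    ∂[v] (expQuadratic k α A β) = fun p =>
      v.1 * expQuadratic k 0 (k • A) (2 * k * β) p + v.2 * expQuadratic k 0 (deriv A) 0 p := by
  funext p
  have hA' : HasFDerivAt (fun q : ℝ × ℝ => A q.2) _ p :=
    (hA p.2).hasDerivAt.comp_hasFDerivAt p (hasFDerivAt_snd (𝕜 := ℝ))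
  have hexp : HasFDerivAt (fun q : ℝ × ℝ => exp (k * q.1)) _ p :=
    ((hasFDerivAt_fst (𝕜 := ℝ)).const_mul k).exp
  have hτ : HasFDerivAt (expQuadratic k α A β) _ p :=
    ((hA'.mul hexp).const_add α).add ((hexp.pow 2).const_mul β)
  simp only [dirDeriv, hτ.fderiv, expQuadratic, Nat.add_one_sub_one, pow_one, nsmul_eq_mul,
    Nat.cast_ofNat, add_apply, smul_apply, ContinuousLinearMap.coe_fst', smul_eq_mul,
    ContinuousLinearMap.coe_snd', Pi.smul_apply, zero_add, zero_mul, add_zero]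
  ring

theorem dirDeriv_fst_expQuadratic (hA : Differentiable ℝ A) :
    ∂[(1, 0)] (expQuadratic k α A β) = expQuadratic k 0 (k • A) (2 * k * β) := by
  simp [dirDeriv_expQuadratic k α β hA]

theorem dirDeriv_snd_expQuadratic (hA : Differentiable ℝ A) :
    ∂[(0, 1)] (expQuadratic k α A β) = expQuadratic k 0 (deriv A) 0 := by
  simp [dirDeriv_expQuadratic k α β hA]

theorem hirotaTwo_fst_expQuadratic (hA : Differentiable ℝ A) (p : ℝ × ℝ) :
    hirotaTwo (1, 0) (expQuadratic k α A β) p =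
      k ^ 2 * (α * A p.2 * exp (k * p.1) + 4 * α * β * exp (k * p.1) ^ 2
        + β * A p.2 * exp (k * p.1) ^ 3) := by
  simp only [hirotaTwo, dirDeriv_fst_expQuadratic, hA, hA.const_smul, expQuadratic,
    Pi.smul_apply, smul_eq_mul]
  ring

theorem hirotaFour_fst_expQuadratic (hA : Differentiable ℝ A) (p : ℝ × ℝ) :
    hirotaFour (1, 0) (expQuadratic k α A β) p =
      k ^ 4 * (α * A p.2 * exp (k * p.1) + 16 * α * β * exp (k * p.1) ^ 2
        + β * A p.2 * exp (k * p.1) ^ 3) := by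
  simp only [hirotaFour, dirDeriv_fst_expQuadratic, hA, hA.const_smul, smul_smul, expQuadratic,
    Pi.smul_apply, smul_eq_mul]
  ring

theorem hirotaTwo_snd_expQuadratic (hA : Differentiable ℝ A) (hA' : Differentiable ℝ (deriv A))
    (p : ℝ × ℝ) :
    hirotaTwo (0, 1) (expQuadratic k α A β) p =
      α * deriv (deriv A) p.2 * exp (k * p.1)
        + (A p.2 * deriv (deriv A) p.2 - deriv A p.2 ^ 2) * exp (k * p.1) ^ 2
        + β * deriv (deriv A) p.2 * exp (k * p.1) ^ 3 := by
  simp only [hirotaTwo, dirDeriv_snd_expQuadratic, hA, hA', expQuadratic]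
  ring

variable {k α β} in
theorem isHirotaBoussinesq_expQuadratic {a b c ω : ℝ} (hω : ω ^ 2 = k ^ 4 + (2 * c - 1) * k ^ 2)
    (hamp : ω ^ 2 * (a ^ 2 + b ^ 2) = 4 * α * β * (4 * k ^ 4 + (2 * c - 1) * k ^ 2))
    (p : ℝ × ℝ) : IsHirotaBoussinesq c (expQuadratic k α (harmonicOscillation a b ω) β) p := by
  have hpyth := sin_sq_add_cos_sq (ω * p.2)
  simp only [IsHirotaBoussinesq, hirotaTwo_fst_expQuadratic, hirotaFour_fst_expQuadratic,
    hirotaTwo_snd_expQuadratic, deriv_harmonicOscillation, differentiable_harmonicOscillation,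
    harmonicOscillation]
  linear_combination (-(a * cos (ω * p.2) + b * sin (ω * p.2)) *
    (α * exp (k * p.1) + β * exp (k * p.1) ^ 3)) * hω
    - exp (k * p.1) ^ 2 * hamp - ω ^ 2 * (a ^ 2 + b ^ 2) * exp (k * p.1) ^ 2 * hpyth

/-- The `τ`-function of the breather of wave number `3^{-1/4}` on the background `1/2`; by
`breatherTau_eq` it is the expression squared in the denominator of the given formula. -/
noncomputable def breatherTau : ℝ × ℝ → ℝ :=
  expQuadratic (3 ^ (-(1 : ℝ) / 4)) 1 (harmonicOscillation (-4) (4 * √3) (1 / √3)) 4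

theorem breatherTau_eq (p : ℝ × ℝ) :
    breatherTau p = 4 * √3 * yfun p.1 * sin (p.2 / √3) - 4 * yfun p.1 * cos (p.2 / √3)
      + 4 * yfun p.1 ^ 2 + 1 := by
  simp only [breatherTau, expQuadratic, harmonicOscillation, yfun, one_div_mul_eq_div]
  ring

theorem three_rpow_neg_one_div_four_sq : ((3 : ℝ) ^ (-(1 : ℝ) / 4)) ^ 2 = 1 / √3 := by
  rw [← rpow_mul_natCast (by norm_num), sqrt_eq_rpow, one_div, ← rpow_neg (by norm_num)]
  norm_num

theorem isHirotaBoussinesq_breatherTau (p : ℝ × ℝ) :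
    IsHirotaBoussinesq (1 / 2) breatherTau p := by
  have hk4 : ((3 : ℝ) ^ (-(1 : ℝ) / 4)) ^ 4 = 1 / 3 := by
    rw [show 4 = 2 * 2 by rfl, pow_mul, three_rpow_neg_one_div_four_sq]
    norm_num
  apply isHirotaBoussinesq_expQuadratic <;> rw [hk4] <;> norm_num [mul_pow]

theorem hirotaTwo_fst_breatherTau (p : ℝ × ℝ) :
    hirotaTwo (1, 0) breatherTau p = 1 / √3 *
      ((4 * √3 * sin (p.2 / √3) - 4 * cos (p.2 / √3)) * (yfun p.1 + 4 * yfun p.1 ^ 3)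
        + 16 * yfun p.1 ^ 2) := by
  rw [breatherTau, hirotaTwo_fst_expQuadratic _ _ _ (differentiable_harmonicOscillation _ _ _),
    three_rpow_neg_one_div_four_sq]
  simp only [harmonicOscillation, yfun, one_div_mul_eq_div]
  ring

theorem cos_sqrt_three_mul_add_pi_div_three (t : ℝ) :
    cos ((√3 * t + π) / 3) = (cos (t / √3) - √3 * sin (t / √3)) / 2 := by
  have hangle : (√3 * t + π) / 3 = t / √3 + π / 3 := by
    field_simp
    linear_combination t * sq_sqrt (show (0 : ℝ) ≤ 3 by norm_num)
  rw [hangle, cos_add, cos_pi_div_three, sin_pi_div_three]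
  ring

theorem sin_four_sqrt_three_mul_add_pi_div_six (t : ℝ) :
    sin ((4 * √3 * t + π) / 6) =
      √3 * sin (t / √3) * cos (t / √3) + (cos (t / √3) ^ 2 - sin (t / √3) ^ 2) / 2 := by
  have hangle : (4 * √3 * t + π) / 6 = 2 * (t / √3) + π / 6 := by
    field_simp
    linear_combination 4 * t * sq_sqrt (show (0 : ℝ) ≤ 3 by norm_num)
  rw [hangle, sin_add, cos_pi_div_six, sin_pi_div_six, sin_two_mul, cos_two_mul']
  ring

theorem breather_eq_hirota {p : ℝ × ℝ} (hp : breatherTau p ≠ 0) :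
    (2 - 32 * (1 + 2 * √3) * (yfun p.1 + 4 * yfun p.1 ^ 3) * cos ((√3 * p.2 + π) / 3)
        + 16 * yfun p.1 ^ 2 * (8 * √3 + 5 - 4 * sin ((4 * √3 * p.2 + π) / 6))
        + 32 * yfun p.1 ^ 4) / (4 * breatherTau p ^ 2) =
      1 / 2 + 6 * (hirotaTwo (1, 0) breatherTau p / breatherTau p ^ 2) := by
  have hsqrt : √3 ^ 2 = 3 := sq_sqrt (by norm_num)
  have hpyth := sin_sq_add_cos_sq (p.2 / √3)
  rw [cos_sqrt_three_mul_add_pi_div_three, sin_four_sqrt_three_mul_add_pi_div_six,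
    hirotaTwo_fst_breatherTau]
  field_simp
  rw [breatherTau_eq]
  linear_combination (64 * (√3 * sin (p.2 / √3) - cos (p.2 / √3)) *
      (yfun p.1 + 4 * yfun p.1 ^ 3) + 256 * yfun p.1 ^ 2
      - 64 * √3 * yfun p.1 ^ 2 * sin (p.2 / √3) ^ 2) * hsqrt
    - 128 * √3 * yfun p.1 ^ 2 * hpyth

end Breather

/-- The (singular) breather solution of the "good" Boussinesq equation of
Example 2: with `y = exp(3^{-1/4}x)`,
`u = [2 - 32(1+2√3)(y+4y³)cos((√3t+π)/3) + 16y²(8√3+5-4sin((4√3t+π)/6)) + 32y⁴] /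
  [4(4√3 y sin(t/√3) - 4y cos(t/√3) + 4y² + 1)²]`
is smooth and solves `u_tt - u_xx + (u²)_xx + u_xxxx = 0` wherever
`4√3 y sin(t/√3) - 4y cos(t/√3) + 4y² + 1 ≠ 0`. -/
theorem breather_boussinesq
    (u : ℝ × ℝ → ℝ)
    (hu : u = fun p =>
      (2 - 32 * (1 + 2 * Real.sqrt 3) * (yfun p.1 + 4 * yfun p.1 ^ 3)
            * Real.cos ((Real.sqrt 3 * p.2 + Real.pi) / 3)
        + 16 * yfun p.1 ^ 2
            * (8 * Real.sqrt 3 + 5 - 4 * Real.sin ((4 * Real.sqrt 3 * p.2 + Real.pi) / 6))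
        + 32 * yfun p.1 ^ 4)
      / (4 * (4 * Real.sqrt 3 * yfun p.1 * Real.sin (p.2 / Real.sqrt 3)
            - 4 * yfun p.1 * Real.cos (p.2 / Real.sqrt 3) + 4 * yfun p.1 ^ 2 + 1) ^ 2))
    (S : Set (ℝ × ℝ))
    (hS : S = {p : ℝ × ℝ |
      4 * Real.sqrt 3 * yfun p.1 * Real.sin (p.2 / Real.sqrt 3)
        - 4 * yfun p.1 * Real.cos (p.2 / Real.sqrt 3) + 4 * yfun p.1 ^ 2 + 1 ≠ 0}) :
    ContDiffOn ℝ (⊤ : ℕ∞) u S ∧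
    ∀ p ∈ S,
      pdt (pdt u) p - pdx (pdx u) p + pdx (pdx (fun p' => u p' ^ 2)) p
        + pdx (pdx (pdx (pdx u))) p = 0 := by
  have hSτ : S = {p | breatherTau p ≠ 0} := by simp only [hS, breatherTau_eq]
  have hτ : ContDiff ℝ (⊤ : ℕ∞) breatherTau :=
    contDiff_expQuadratic _ _ _ (contDiff_harmonicOscillation _ _ _)
  have hopen : IsOpen S := hSτ ▸ isOpen_ne_fun hτ.continuous continuous_const
  refine IsGoodBoussinesqOn.of_hirota hopen hτ.contDiffOn (fun p hp => hSτ.subset hp)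
    (fun p _ => isHirotaBoussinesq_breatherTau p) fun p hp => ?_
  rw [← breather_eq_hirota (hSτ.subset hp), hu, breatherTau_eq]
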